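/- Let m ≥ 1, y₀ ∈ ℝ^m, and let μ : ℝ^m → ℝ^m be C². Define C⁻¹(y) = −(1/2)‖y − y₀‖², C⁰(y) = ∑_{i=1}^m (y_i − y_{0i}) ∫₀¹ μ_i(y₀ + u(y − y₀)) du, and for Δ > 0 set l(Δ, y) = −(m/2)·ln(2πΔ) + C⁻¹(y)/Δ + C⁰(y). Then for every Δ > 0 and every y ∈ ℝ^m, the forward-Kolmogorov residual F(Δ, y) := ∂l/∂Δ + ∑_{i=1}^m ∂μ_i/∂y_i(y) + ∑_{i=1}^m μ_i(y)·∂l/∂y_i − (1/2)∑_{i=1}^m ∂²l/∂y_i² − (1/2)∑_{i=1}^m (∂l/∂y_i)² does not depend on Δ: it equals ∑_{i=1}^m ∂μ_i/∂y_i(y) + ∑_{i=1}^m μ_i(y)·∂C⁰/∂y_i(y) − (1/2)∑_{i=1}^m (∂²C⁰/∂y_i²(y) + (∂C⁰/∂y_i(y))²). In particular, the coefficients of Δ^{-2} and Δ^{-1} in F vanish identically. -/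

import Mathlib

/-- Partial derivative of a scalar function on `EuclideanSpace ℝ (Fin m)` in the `i`-th
coordinate direction. -/
noncomputable def pd16 {m : ℕ} (f : EuclideanSpace ℝ (Fin m) → ℝ) (i : Fin m)
    (y : EuclideanSpace ℝ (Fin m)) : ℝ :=
  fderiv ℝ f y (EuclideanSpace.single i 1)

/-!
In powers of `Δ`, the gradient of the expansion is `-(y - y₀) / Δ + ∇C⁰`. The `Δ⁻²` terms of the
residual are `‖y - y₀‖² / 2`, from the time derivative, and `-‖y - y₀‖² / 2`, from the squared
gradient. At order `Δ⁻¹` the normalising term `-m / 2` cancels half the Laplacian of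
`‖y - y₀‖² / 2`, and what remains is `⟪y - y₀, ∇C⁰ y - μ y⟫`. It vanishes because `C⁰ y` is the
integral of the 1-form `⟪μ, ·⟫` along the segment from `y₀` to `y`: its radial derivative is
`⟪μ y, y - y₀⟫` by the fundamental theorem of calculus, whether or not `μ` is a gradient.
-/

section ParametricIntegral

open Set Topology

theorem exists_eventually_forall_norm_le {X Y H : Type*} [TopologicalSpace X] [TopologicalSpace Y]
    [SeminormedAddCommGroup H] {f : X × Y → H} (hf : Continuous f) {K : Set Y} (hK : IsCompact K)
    (x₀ : X) : ∃ C, ∀ᶠ x in 𝓝 x₀, ∀ y ∈ K, ‖f (x, y)‖ ≤ C := by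
  obtain ⟨C, hC⟩ := hK.exists_bound_of_continuousOn (f := fun y => f (x₀, y)) (by fun_prop)
  refine ⟨C + 1, hK.eventually_forall_of_forall_eventually fun y hy => ?_⟩
  have hlt : ‖f (x₀, y)‖ < C + 1 := (hC y hy).trans_lt (lt_add_one C)
  exact (hf.norm.continuousAt.eventually_lt continuousAt_const hlt).mono fun _ => le_of_lt

theorem hasFDerivAt_intervalIntegral_of_contDiff {E G : Type*}
    [NormedAddCommGroup E] [NormedSpace ℝ E] [NormedAddCommGroup G] [NormedSpace ℝ G]
    {f : E × ℝ → G} (hf : ContDiff ℝ 1 f) (a b : ℝ) (x₀ : E) :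
    HasFDerivAt (fun x => ∫ t in a..b, f (x, t))
      (∫ t in a..b, (fderiv ℝ f (x₀, t)).comp (ContinuousLinearMap.inl ℝ E ℝ)) x₀ := by
  have hf_cont : Continuous f := hf.continuous
  have hf'_cont : Continuous fun p : E × ℝ =>
      (fderiv ℝ f p).comp (ContinuousLinearMap.inl ℝ E ℝ) :=
    (hf.continuous_fderiv one_ne_zero).clm_comp continuous_const
  obtain ⟨C, hC⟩ := exists_eventually_forall_norm_le hf'_cont (isCompact_uIcc (a := a) (b := b)) x₀
  refine intervalIntegral.hasFDerivAt_integral_of_dominated_of_fderiv_le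
    (F' := fun x t => (fderiv ℝ f (x, t)).comp (ContinuousLinearMap.inl ℝ E ℝ))
    (bound := fun _ => C) hC ?_ ?_ ?_ ?_ intervalIntegrable_const ?_
  · exact .of_forall fun x =>
      (hf_cont.comp (Continuous.prodMk_right x)).aestronglyMeasurable
  · exact (hf_cont.comp (Continuous.prodMk_right x₀)).intervalIntegrable a b
  · exact (hf'_cont.comp (Continuous.prodMk_right x₀)).aestronglyMeasurable
  · exact .of_forall fun t ht x hx => hx t (uIoc_subset_uIcc ht)
  · exact .of_forall fun t _ x _ =>
      (hf.differentiable one_ne_zero (x, t)).hasFDerivAt.comp x (hasFDerivAt_prodMk_left x t)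

-- `E` and `G` share a universe because the induction replaces `G` by `E →L[ℝ] G`.
theorem contDiff_intervalIntegral_of_contDiff.{u} {E G : Type u}
    [NormedAddCommGroup E] [NormedSpace ℝ E] [NormedAddCommGroup G] [NormedSpace ℝ G]
    {n : ℕ∞} {f : E × ℝ → G} (hf : ContDiff ℝ n f) (a b : ℝ) :
    ContDiff ℝ n fun x => ∫ t in a..b, f (x, t) := by
  refine contDiff_iff_forall_nat_le.2 fun k hk => ?_
  replace hf : ContDiff ℝ k f := hf.of_le (mod_cast hk)
  clear hk
  induction k generalizing G with
  | zero =>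
    rw [Nat.cast_zero, contDiff_zero] at hf ⊢
    exact intervalIntegral.continuous_parametric_intervalIntegral_of_continuous'
      (f := fun x t => f (x, t)) hf a b
  | succ k ih =>
    rw [Nat.cast_succ] at hf ⊢
    have hf' : ContDiff ℝ k fun p => (fderiv ℝ f p).comp (ContinuousLinearMap.inl ℝ E ℝ) :=
      (hf.fderiv_right le_rfl).clm_comp contDiff_const
    exact contDiff_succ_iff_hasFDerivAt.2
      ⟨_, ih hf', hasFDerivAt_intervalIntegral_of_contDiff (hf.of_le (by simp)) a b⟩

end ParametricIntegral

section SegmentIntegral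

open AffineMap

universe u

section

variable {E F : Type*} [NormedAddCommGroup E] [NormedSpace ℝ E]
  [NormedAddCommGroup F] [NormedSpace ℝ F] {ω : E → E →L[ℝ] F}

theorem curveIntegral_segment_lineMap (ω : E → E →L[ℝ] F) (y₀ y : E) (t : ℝ) :
    ∫ᶜ x in .segment y₀ (lineMap y₀ y t), ω x =
      ∫ u in 0..t, ω (lineMap y₀ y u) (y - y₀) := by
  have hscale := intervalIntegral.smul_integral_comp_mul_right (a := 0) (b := 1)
    (fun u : ℝ => ω (lineMap y₀ y u) (y - y₀)) t
  rw [zero_mul, one_mul] at hscale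
  rw [curveIntegral_segment, ← hscale, ← intervalIntegral.integral_smul]
  simp [lineMap_apply_module', smul_smul]

theorem hasLineDerivAt_curveIntegral_segment [CompleteSpace F] (hω : Continuous ω) (y₀ y : E) :
    HasLineDerivAt ℝ (fun y => ∫ᶜ x in .segment y₀ y, ω x) (ω y (y - y₀)) y (y - y₀) := by
  have hcont : Continuous fun u : ℝ => ω (lineMap y₀ y u) (y - y₀) := by
    simp only [lineMap_apply_module']
    fun_prop
  have hray (t : ℝ) : y + t • (y - y₀) = lineMap y₀ y (1 + t) := by
    rw [lineMap_apply_module']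
    module
  have hprimitive : (fun t : ℝ => ∫ᶜ x in .segment y₀ (y + t • (y - y₀)), ω x) =
      fun t => ∫ u in 0..1 + t, ω (lineMap y₀ y u) (y - y₀) := by
    funext t
    rw [hray, curveIntegral_segment_lineMap]
  have hFTC : HasDerivAt (fun s => ∫ u in 0..s, ω (lineMap y₀ y u) (y - y₀))
      (ω y (y - y₀)) (1 + 0) := by
    simpa using hcont.integral_hasStrictDerivAt 0 (1 + 0) |>.hasDerivAt
  rw [HasLineDerivAt, hprimitive]
  exact hFTC.comp_const_add 1 0

end

variable {E F : Type u} [NormedAddCommGroup E] [NormedSpace ℝ E]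
  [NormedAddCommGroup F] [NormedSpace ℝ F] {ω : E → E →L[ℝ] F}

theorem contDiff_curveIntegral_segment {n : ℕ∞} (hω : ContDiff ℝ n ω) (y₀ : E) :
    ContDiff ℝ n fun y => ∫ᶜ x in .segment y₀ y, ω x := by
  simp only [curveIntegral_segment, lineMap_apply_module']
  exact contDiff_intervalIntegral_of_contDiff
    (f := fun p : E × ℝ => ω (p.2 • (p.1 - y₀) + y₀) (p.1 - y₀)) (by fun_prop) 0 1

theorem fderiv_curveIntegral_segment_apply_sub [CompleteSpace F] (hω : ContDiff ℝ 1 ω)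
    (y₀ y : E) :
    fderiv ℝ (fun y => ∫ᶜ x in .segment y₀ y, ω x) y (y - y₀) = ω y (y - y₀) := by
  have hdiff : DifferentiableAt ℝ (fun y => ∫ᶜ x in .segment y₀ y, ω x) y :=
    (contDiff_curveIntegral_segment (n := 1) hω y₀).differentiable one_ne_zero y
  rw [← hdiff.lineDeriv_eq_fderiv]
  exact (hasLineDerivAt_curveIntegral_segment hω.continuous y₀ y).lineDeriv

end SegmentIntegral

theorem curveIntegral_segment_innerSL_eq_sum {ι : Type*} [Fintype ι]
    {μ : EuclideanSpace ℝ ι → EuclideanSpace ℝ ι} (hμ : Continuous μ)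
    (y₀ y : EuclideanSpace ℝ ι) :
    ∫ᶜ x in .segment y₀ y, innerSL ℝ (μ x) =
      ∑ i, (y i - y₀ i) * ∫ u in (0 : ℝ)..1, μ (y₀ + u • (y - y₀)) i := by
  simp_rw [curveIntegral_segment, AffineMap.lineMap_apply_module', add_comm _ y₀,
    innerSL_apply_apply, PiLp.inner_apply, ← intervalIntegral.integral_const_mul]
  rw [intervalIntegral.integral_finsetSum fun i _ =>
    Continuous.intervalIntegrable (by fun_prop) 0 1]
  simp

section ForwardEquation

variable {m : ℕ}

theorem pd16_eq_of_hasFDerivAt {f : EuclideanSpace ℝ (Fin m) → ℝ}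
    {f' : EuclideanSpace ℝ (Fin m) →L[ℝ] ℝ} {y : EuclideanSpace ℝ (Fin m)}
    (hf : HasFDerivAt f f' y) (i : Fin m) : pd16 f i y = f' (EuclideanSpace.single i 1) := by
  rw [pd16, hf.fderiv]

theorem sum_mul_pd16 (f : EuclideanSpace ℝ (Fin m) → ℝ) (v y : EuclideanSpace ℝ (Fin m)) :
    ∑ i, v i * pd16 f i y = fderiv ℝ f y v := by
  conv_rhs => rw [← (EuclideanSpace.basisFun (Fin m) ℝ).sum_repr v]
  simp [pd16]

theorem differentiable_pd16 {f : EuclideanSpace ℝ (Fin m) → ℝ} (hf : ContDiff ℝ 2 f)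
    (i : Fin m) : Differentiable ℝ (pd16 f i) :=
  ((hf.fderiv_right (m := 1) (by norm_num)).differentiable one_ne_zero).clm_apply
    (differentiable_const _)

/-- The expansion `-(m/2) log (2πΔ) - ‖y - y₀‖² / (2Δ) + C y` of a log-transition density in small
time `Δ`, with an arbitrary coefficient `C` of order `Δ⁰`. It is meaningful for `0 < Δ` only. -/
noncomputable def logDensityExpansion (y₀ : EuclideanSpace ℝ (Fin m))
    (C : EuclideanSpace ℝ (Fin m) → ℝ) (Δ : ℝ) (y : EuclideanSpace ℝ (Fin m)) : ℝ :=
  -((m : ℝ) / 2) * Real.log (2 * Real.pi * Δ) + -(1 / 2) * ‖y - y₀‖ ^ 2 / Δ + C y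

/-- The difference of the two sides of the logarithmic Kolmogorov forward equation for
`dY = μ(Y) dt + dW`, evaluated at a candidate log-density `l`. Derivatives are total functions
here, so the value is meaningful only where `l` and `μ` are differentiable enough. -/
noncomputable def forwardResidual (μ : EuclideanSpace ℝ (Fin m) → EuclideanSpace ℝ (Fin m))
    (l : ℝ → EuclideanSpace ℝ (Fin m) → ℝ) (Δ : ℝ) (y : EuclideanSpace ℝ (Fin m)) : ℝ :=
  deriv (fun t => l t y) Δ +
    (∑ i : Fin m, pd16 (fun y => μ y i) i y) +
    (∑ i : Fin m, μ y i * pd16 (l Δ) i y) -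
    (1 / 2) * ∑ i : Fin m, pd16 (pd16 (l Δ) i) i y -
    (1 / 2) * ∑ i : Fin m, (pd16 (l Δ) i y) ^ 2

variable {y₀ y : EuclideanSpace ℝ (Fin m)} {C : EuclideanSpace ℝ (Fin m) → ℝ} {Δ : ℝ}

theorem deriv_logDensityExpansion (hΔ : Δ ≠ 0) :
    deriv (fun t => logDensityExpansion y₀ C t y) Δ =
      -(m / 2) / Δ + ‖y - y₀‖ ^ 2 / (2 * Δ ^ 2) := by
  have hlog : HasDerivAt (fun t => Real.log (2 * Real.pi * t))
      (2 * Real.pi / (2 * Real.pi * Δ)) Δ :=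
    (hasDerivAt_const_mul (2 * Real.pi)).log (by simp [hΔ, Real.pi_ne_zero])
  have hinv : HasDerivAt (fun t : ℝ => -(1 / 2) * ‖y - y₀‖ ^ 2 / t)
      (-(1 / 2) * ‖y - y₀‖ ^ 2 * -(Δ ^ 2)⁻¹) Δ := by
    simpa only [div_eq_mul_inv] using (hasDerivAt_inv hΔ).const_mul (-(1 / 2) * ‖y - y₀‖ ^ 2)
  have hsum := ((hlog.const_mul (-((m : ℝ) / 2))).add hinv).add_const (C y)
  refine hsum.deriv.trans ?_
  field_simp [Real.pi_ne_zero]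

theorem pd16_logDensityExpansion (hC : DifferentiableAt ℝ C y) (i : Fin m) :
    pd16 (logDensityExpansion y₀ C Δ) i y = -(y i - y₀ i) / Δ + pd16 C i y := by
  have hsq : HasFDerivAt (fun y => ‖y - y₀‖ ^ 2) (2 • innerSL ℝ (y - y₀)) y := by
    simpa using ((hasFDerivAt_id y).sub_const y₀).norm_sq
  have hinner : inner ℝ (y - y₀) (EuclideanSpace.single i 1) = y i - y₀ i := by
    simp [EuclideanSpace.inner_single_right]
  have hsum := (((hsq.const_mul (-(1 / 2))).mul_const Δ⁻¹).const_add
    (-((m : ℝ) / 2) * Real.log (2 * Real.pi * Δ))).add hC.hasFDerivAt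
  refine (pd16_eq_of_hasFDerivAt hsum i).trans ?_
  simp only [add_apply, smul_apply, innerSL_apply_apply, hinner, pd16, smul_eq_mul, nsmul_eq_mul,
    Nat.cast_ofNat]
  ring

theorem pd16_pd16_logDensityExpansion (hC : Differentiable ℝ C) (i : Fin m)
    (hCi : DifferentiableAt ℝ (pd16 C i) y) :
    pd16 (pd16 (logDensityExpansion y₀ C Δ) i) i y = -1 / Δ + pd16 (pd16 C i) i y := by
  have hcoord : HasFDerivAt (fun y : EuclideanSpace ℝ (Fin m) => y i)
      (EuclideanSpace.proj i : EuclideanSpace ℝ (Fin m) →L[ℝ] ℝ) y :=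
    (EuclideanSpace.proj i : EuclideanSpace ℝ (Fin m) →L[ℝ] ℝ).hasFDerivAt
  have hsum := ((hcoord.sub_const (y₀ i)).neg.mul_const Δ⁻¹).add hCi.hasFDerivAt
  have hfirst : pd16 (logDensityExpansion y₀ C Δ) i = fun z => -(z i - y₀ i) / Δ + pd16 C i z :=
    funext fun z => pd16_logDensityExpansion (hC z) i
  rw [hfirst]
  refine (pd16_eq_of_hasFDerivAt hsum i).trans ?_
  simp [pd16, neg_div]

-- The hypothesis on `fderiv ℝ C y` is the equation that the `Δ⁻¹` terms impose on `C`.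
theorem forwardResidual_logDensityExpansion
    (μ : EuclideanSpace ℝ (Fin m) → EuclideanSpace ℝ (Fin m)) (hC : ContDiff ℝ 2 C)
    (hradial : fderiv ℝ C y (y - y₀) = inner ℝ (μ y) (y - y₀)) (hΔ : Δ ≠ 0) :
    forwardResidual μ (logDensityExpansion y₀ C) Δ y =
      (∑ i : Fin m, pd16 (fun y => μ y i) i y) + (∑ i : Fin m, μ y i * pd16 C i y) -
        (1 / 2) * ∑ i : Fin m, (pd16 (pd16 C i) i y + (pd16 C i y) ^ 2) := by
  have hCd : Differentiable ℝ C := hC.differentiable two_ne_zero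
  have hcross : ∑ i, (y i - y₀ i) * pd16 C i y = ∑ i, (y i - y₀ i) * μ y i := by
    simpa [PiLp.inner_apply] using (sum_mul_pd16 C (y - y₀) y).trans hradial
  have htransport : ∑ i, μ y i * (-(y i - y₀ i) / Δ + pd16 C i y) =
      -(∑ i, (y i - y₀ i) * μ y i) / Δ + ∑ i, μ y i * pd16 C i y := by
    rw [← Finset.sum_neg_distrib, Finset.sum_div, ← Finset.sum_add_distrib]
    exact Finset.sum_congr rfl fun i _ => by ring
  have hlaplacian : ∑ i, (-1 / Δ + pd16 (pd16 C i) i y) =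
      -m / Δ + ∑ i, pd16 (pd16 C i) i y := by
    simp [Finset.sum_add_distrib, div_eq_mul_inv]
  have hgradient : ∑ i, (-(y i - y₀ i) / Δ + pd16 C i y) ^ 2 =
      ‖y - y₀‖ ^ 2 / Δ ^ 2 - 2 * (∑ i, (y i - y₀ i) * pd16 C i y) / Δ +
        ∑ i, (pd16 C i y) ^ 2 := by
    rw [EuclideanSpace.real_norm_sq_eq, Finset.mul_sum, Finset.sum_div, Finset.sum_div,
      ← Finset.sum_sub_distrib, ← Finset.sum_add_distrib]
    exact Finset.sum_congr rfl fun i _ => by rw [PiLp.sub_apply]; ring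
  simp only [forwardResidual, deriv_logDensityExpansion hΔ, pd16_logDensityExpansion (hCd y),
    pd16_pd16_logDensityExpansion hCd _ (differentiable_pd16 hC _ y)]
  rw [htransport, hlaplacian, hgradient, hcross, Finset.sum_add_distrib]
  ring

end ForwardEquation

/-- The `K = 0` case of Theorem 1 of the paper: with `C⁻¹(y) = −(1/2)‖y−y₀‖²`,
`C⁰(y) = ∑_i (y_i−y_{0i}) ∫₀¹ μ_i(y₀+u(y−y₀)) du` and
`l(Δ,y) = −(m/2)ln(2πΔ) + C⁻¹(y)/Δ + C⁰(y)`, the residual `F(Δ,y)` of the logarithmic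
Kolmogorov forward equation (18) does not depend on `Δ`: it equals
`∑_i ∂μ_i/∂y_i + ∑_i μ_i ∂C⁰/∂y_i − (1/2)∑_i (∂²C⁰/∂y_i² + (∂C⁰/∂y_i)²)`. In
particular, the coefficients of `Δ^{-2}` and `Δ^{-1}` in `F` vanish identically. -/
theorem forward_residual_is_Delta_independent
    (m : ℕ) (hm : 1 ≤ m) (y₀ : EuclideanSpace ℝ (Fin m))
    (μ : EuclideanSpace ℝ (Fin m) → EuclideanSpace ℝ (Fin m)) (hμ : ContDiff ℝ 2 μ)
    (Cm C0 : EuclideanSpace ℝ (Fin m) → ℝ)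
    (hCm : ∀ y, Cm y = -(1 / 2) * ‖y - y₀‖ ^ 2)
    (hC0 : ∀ y, C0 y = ∑ i : Fin m,
      (y i - y₀ i) * ∫ u in (0:ℝ)..1, μ (y₀ + u • (y - y₀)) i)
    (l : ℝ → EuclideanSpace ℝ (Fin m) → ℝ)
    (hl : ∀ Δ y, l Δ y = -((m : ℝ) / 2) * Real.log (2 * Real.pi * Δ) + Cm y / Δ + C0 y)
    (F : ℝ → EuclideanSpace ℝ (Fin m) → ℝ)
    (hF : ∀ Δ y, F Δ y =
      deriv (fun t => l t y) Δ +
        (∑ i : Fin m, pd16 (fun y => μ y i) i y) +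
        (∑ i : Fin m, μ y i * pd16 (l Δ) i y) -
        (1 / 2) * ∑ i : Fin m, pd16 (pd16 (l Δ) i) i y -
        (1 / 2) * ∑ i : Fin m, (pd16 (l Δ) i y) ^ 2) :
    ∀ Δ : ℝ, 0 < Δ → ∀ y : EuclideanSpace ℝ (Fin m),
      F Δ y =
        (∑ i : Fin m, pd16 (fun y => μ y i) i y) +
          (∑ i : Fin m, μ y i * pd16 C0 i y) -
          (1 / 2) * ∑ i : Fin m, (pd16 (pd16 C0 i) i y + (pd16 C0 i y) ^ 2) := by
  intro Δ hΔ y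
  have hform : ContDiff ℝ 2 fun x => innerSL ℝ (μ x) := (innerSL ℝ).contDiff.comp hμ
  obtain rfl : C0 = fun y => ∫ᶜ x in .segment y₀ y, innerSL ℝ (μ x) :=
    funext fun y => (hC0 y).trans (curveIntegral_segment_innerSL_eq_sum hμ.continuous y₀ y).symm
  obtain rfl : l = logDensityExpansion y₀ fun y => ∫ᶜ x in .segment y₀ y, innerSL ℝ (μ x) := by
    funext Δ y
    rw [hl, hCm, logDensityExpansion]
  rw [hF]
  exact forwardResidual_logDensityExpansion μ (contDiff_curveIntegral_segment (n := 2) hform y₀)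
    (fderiv_curveIntegral_segment_apply_sub (hform.of_le one_le_two) y₀ y) hΔ.ne'
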